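/- arXiv:1304.6250 — 9 statements merged into one kernel-verified Lean document; each statement's English description precedes it below -/
import Mathlib

section
/- Let k be a finite field and let R := MvPowerSeries (Fin 2) k be the ring of formal power series k[[t₁,t₂]] in two variables over k. Then every element of the fraction field of R can be written as a finite sum of elements of the form β/(α^m · γ^n), where β ∈ R, α and γ are irreducible elements of R that are not associates of each other, and m, n are natural numbers with m + n ≥ 1. -/
/-!
Let `R` be a Noetherian local UFD whose maximal ideal has height at most two, for instance
`k[[t₁,t₂]]`. If `α`, `γ` are non-associated irreducibles, a prime containing both strictly
contains the nonzero prime `(α)`, so it has height at least two and is the maximal ideal. Hence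
`(α ^ m, γ ^ n)` is the unit ideal or is primary to the maximal ideal, and every non-unit `p` has
a power `p ^ N = u * α ^ m + v * γ ^ n`. Dividing by `α ^ m * γ ^ n * p ^ (N + 1)` gives
`1 / (α ^ m * γ ^ n * p) = u / (p ^ (N + 1) * γ ^ n) + v / (p ^ (N + 1) * α ^ m)`,
so for irreducible `p` the additive subgroup generated by fractions with at most two distinct
primes in the denominator is stable under division by `p`. It contains `R`, and every nonzero
denominator is a unit times a product of irreducibles, so it is the whole fraction field.

For `k[[t₁,t₂]]` the UFD property comes from the isomorphism with power series over the principal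
ideal domain `k[[t]]`, and the height bound from Krull's height theorem, the maximal ideal being
generated by the two variables.
-/

open MvPowerSeries in
/-- The UFD property comes from viewing the ring as power series over the PID `k[[t]]`. -/
theorem mvPowerSeries_fin_two_ufm (k : Type*) [Field k] :
    UniqueFactorizationMonoid (MvPowerSeries (Fin 2) k) := by
  have e₁ : PowerSeries k ≃+* MvPowerSeries (Fin 1) k :=
    (renameEquiv k (Equiv.ofUnique Unit (Fin 1))).toRingEquiv
  have : IsPrincipalIdealRing (MvPowerSeries (Fin 1) k) :=
    IsPrincipalIdealRing.of_surjective e₁.toRingHom e₁.surjective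
  have := NoZeroDivisors.to_isDomain (MvPowerSeries (Fin 1) k)
  exact (finSuccEquiv k 1).symm.toMulEquiv.uniqueFactorizationMonoid inferInstance

open MvPowerSeries in
theorem mvPowerSeries_fin_two_prime_X_zero (k : Type*) [Field k] :
    Prime (X 0 : MvPowerSeries (Fin 2) k) := by
  rw [← MulEquiv.prime_iff (finSuccEquiv k 1).toMulEquiv]
  change Prime (finSuccEquiv k 1 (X 0))
  rw [finSuccEquiv_X_zero]
  have := NoZeroDivisors.to_isDomain (MvPowerSeries (Fin 1) k)
  exact PowerSeries.X_prime

open MvPowerSeries in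
theorem mvPowerSeries_fin_two_prime_X_one (k : Type*) [Field k] :
    Prime (X 1 : MvPowerSeries (Fin 2) k) := by
  have h := mvPowerSeries_fin_two_prime_X_zero k
  rw [← MulEquiv.prime_iff (renameEquiv k (Equiv.swap (0 : Fin 2) 1)).toMulEquiv] at h
  change Prime (renameEquiv k (Equiv.swap (0 : Fin 2) 1) (X 0)) at h
  simpa using h

open MvPowerSeries in
theorem mvPowerSeries_fin_two_not_associated (k : Type*) [Field k] :
    ¬ Associated (X 0 : MvPowerSeries (Fin 2) k) (X 1) := by
  intro h
  have := X_dvd_iff.1 h.dvd (Finsupp.single 1 1) (by simp)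
  simp [coeff_index_single_self_X] at this

open MvPowerSeries in
/-- The maximal ideal is generated by the two variables, so Krull's height theorem applies. -/
theorem mvPowerSeries_fin_two_height_le (k : Type*) [Field k] :
    (IsLocalRing.maximalIdeal (MvPowerSeries (Fin 2) k)).height ≤ 2 := by
  classical
  have hspan : IsLocalRing.maximalIdeal (MvPowerSeries (Fin 2) k) =
      Ideal.span ((({X 0, X 1} : Finset (MvPowerSeries (Fin 2) k))) : Set _) := by
    apply le_antisymm
    · intro f hf
      have hf0 : constantCoeff f = 0 := by
        by_contra h
        exact hf (isUnit_iff_constantCoeff.2 (Ne.isUnit h))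
      -- `A` collects the monomials of `f` divisible by the first variable.
      let A : MvPowerSeries (Fin 2) k := fun m => if m 0 = 0 then 0 else coeff m f
      have hA : ∀ m, coeff m A = if m 0 = 0 then 0 else coeff m f := fun m => rfl
      have h0 : (X 0 : MvPowerSeries (Fin 2) k) ∣ A :=
        X_dvd_iff.2 fun m hm => by rw [hA, if_pos hm]
      have h1 : (X 1 : MvPowerSeries (Fin 2) k) ∣ f - A := by
        refine X_dvd_iff.2 fun m hm => ?_
        rw [map_sub, hA]
        split_ifs with h
        · have : m = 0 := by
            ext i
            fin_cases i
            · exact h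
            · exact hm
          rw [this, sub_zero]
          simpa using hf0
        · exact sub_self _
      have : f = A + (f - A) := by ring
      rw [this]
      refine add_mem (Ideal.mem_of_dvd _ h0 (Ideal.subset_span (by simp)))
        (Ideal.mem_of_dvd _ h1 (Ideal.subset_span (by simp)))
    · rw [Ideal.span_le]
      intro f hf
      have : f = X 0 ∨ f = X 1 := by simpa using hf
      rcases this with rfl | rfl
      · exact (mvPowerSeries_fin_two_prime_X_zero k).not_isUnit
      · exact (mvPowerSeries_fin_two_prime_X_one k).not_isUnit
  refine (Ideal.height_le_card_of_mem_minimalPrimes_span_finset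
    (s := {X 0, X 1}) ?_).trans ?_
  · rw [← hspan, Ideal.minimalPrimes_eq_subsingleton_self]
    rfl
  · exact_mod_cast Finset.card_le_two

/-- In dimension at most two, a prime containing two non-associated primes is maximal, so every
non-unit lies in the radical of `(α ^ m, γ ^ n)`. -/
theorem exists_pow_eq_add_of_not_associated {R : Type*} [CommRing R] [IsDomain R] [IsLocalRing R]
    (hht : (IsLocalRing.maximalIdeal R).height ≤ 2) {α γ p : R}
    (hα : Prime α) (hγ : Prime γ) (h : ¬ Associated α γ) (hp : ¬ IsUnit p) (m n : ℕ) :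
    ∃ (N : ℕ) (u v : R), p ^ N = u * α ^ m + v * γ ^ n := by
  have key : p ∈ (Ideal.span {α ^ m, γ ^ n}).radical := by
    rw [Ideal.radical_eq_sInf, Ideal.mem_sInf]
    rintro P ⟨hle, hP⟩
    have hαP : α ∈ P := hP.mem_of_pow_mem m (hle (Ideal.subset_span (by simp)))
    have hγP : γ ∈ P := hP.mem_of_pow_mem n (hle (Ideal.subset_span (by simp)))
    have hprime : (Ideal.span {α}).IsPrime := (Ideal.span_singleton_prime hα.ne_zero).2 hα
    have h1 : (⊥ : Ideal R) < Ideal.span {α} := by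
      rw [bot_lt_iff_ne_bot, Ne, Ideal.span_singleton_eq_bot]
      exact hα.ne_zero
    have h2 : Ideal.span {α} < P := by
      refine lt_of_le_of_ne ((Ideal.span_singleton_le_iff_mem _).2 hαP) ?_
      rintro rfl
      exact h (hα.associated_of_dvd hγ (Ideal.mem_span_singleton.1 hγP))
    have hPm : P = IsLocalRing.maximalIdeal R := by
      by_contra hne
      have h3 := lt_of_le_of_ne (IsLocalRing.le_maximalIdeal hP.ne_top) hne
      have a1 := Ideal.height_add_one_le_of_lt_of_isPrime h1
      have a2 := Ideal.height_add_one_le_of_lt_of_isPrime h2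
      have a3 := Ideal.height_add_one_le_of_lt_of_isPrime h3
      have : (3 : ℕ∞) ≤ 2 := by
        calc (3 : ℕ∞) = 0 + 1 + 1 + 1 := by norm_num
          _ ≤ (⊥ : Ideal R).height + 1 + 1 + 1 := by gcongr; exact zero_le
          _ ≤ (Ideal.span {α}).height + 1 + 1 := by gcongr
          _ ≤ P.height + 1 := by gcongr
          _ ≤ _ := a3
          _ ≤ 2 := hht
      exact absurd this (by decide)
    rw [hPm]
    exact hp
  obtain ⟨N, hN⟩ := key
  obtain ⟨u, v, huv⟩ := Ideal.mem_span_pair.1 hN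
  exact ⟨N, u, v, huv.symm⟩

/-- The fractions `β / (α ^ m * γ ^ n)` with `α`, `γ` non-associated irreducibles and
`1 ≤ m + n`. -/
def twoPrimeFractions (R K : Type*) [CommRing R] [Field K] [Algebra R K] : Set K :=
  {y | ∃ (β α γ : R) (m n : ℕ), Irreducible α ∧ Irreducible γ ∧ ¬ Associated α γ ∧ 1 ≤ m + n ∧
    y = algebraMap R K β * (algebraMap R K (α ^ m * γ ^ n))⁻¹}

section

variable {R K : Type*} [CommRing R] [IsDomain R] [Field K] [Algebra R K] [IsFractionRing R K]

/-- Dividing by an irreducible either raises an exponent or introduces a third prime, which is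
removed by writing one of its powers as a combination of `α ^ m` and `γ ^ n`. -/
theorem mul_inv_mem_closure_of_mem [IsLocalRing R] [UniqueFactorizationMonoid R]
    (hht : (IsLocalRing.maximalIdeal R).height ≤ 2) {p : R} (hp : Irreducible p) {y : K}
    (hy : y ∈ twoPrimeFractions R K) :
    y * (algebraMap R K p)⁻¹ ∈ AddSubmonoid.closure (twoPrimeFractions R K) := by
  have inj := IsFractionRing.injective R K
  have hne : ∀ {a : R}, a ≠ 0 → algebraMap R K a ≠ 0 := fun h =>
    (map_ne_zero_iff _ inj).2 h
  obtain ⟨β, α, γ, m, n, hα, hγ, hαγ, hmn, rfl⟩ := hy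
  have hα' := hne hα.ne_zero
  have hγ' := hne hγ.ne_zero
  have hp' := hne hp.ne_zero
  by_cases h1 : Associated α p
  · obtain ⟨u, rfl⟩ := h1
    apply AddSubmonoid.subset_closure
    have hu' := hne u.ne_zero
    refine ⟨β * ↑u⁻¹, α, γ, m + 1, n, hα, hγ, hαγ, by omega, ?_⟩
    have : algebraMap R K (↑u⁻¹ : R) = (algebraMap R K u)⁻¹ :=
      eq_inv_of_mul_eq_one_left (by rw [← map_mul, Units.inv_mul, map_one])
    simp only [map_mul, map_pow, this]
    field_simp
    ring
  by_cases h2 : Associated γ p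
  · obtain ⟨u, rfl⟩ := h2
    apply AddSubmonoid.subset_closure
    have hu' := hne u.ne_zero
    refine ⟨β * ↑u⁻¹, α, γ, m, n + 1, hα, hγ, hαγ, by omega, ?_⟩
    have : algebraMap R K (↑u⁻¹ : R) = (algebraMap R K u)⁻¹ :=
      eq_inv_of_mul_eq_one_left (by rw [← map_mul, Units.inv_mul, map_one])
    simp only [map_mul, map_pow, this]
    field_simp
    ring
  obtain ⟨N, u, v, huv⟩ := exists_pow_eq_add_of_not_associated hht hα.prime hγ.prime hαγ
    hp.not_isUnit m n
  have huv' := congrArg (algebraMap R K) huv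
  simp only [map_add, map_mul, map_pow] at huv'
  have : algebraMap R K β * (algebraMap R K (α ^ m * γ ^ n))⁻¹ * (algebraMap R K p)⁻¹ =
      algebraMap R K (β * u) * (algebraMap R K (γ ^ n * p ^ (N + 1)))⁻¹ +
      algebraMap R K (β * v) * (algebraMap R K (α ^ m * p ^ (N + 1)))⁻¹ := by
    simp only [map_mul, map_pow]
    field_simp
    rw [pow_succ, huv']
    ring
  rw [this]
  exact add_mem
    (AddSubmonoid.subset_closure ⟨β * u, γ, p, n, N + 1, hγ, hp, h2, by omega, rfl⟩)
    (AddSubmonoid.subset_closure ⟨β * v, α, p, m, N + 1, hα, hp, h1, by omega, rfl⟩)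

theorem mem_closure_twoPrimeFractions [IsLocalRing R] [UniqueFactorizationMonoid R]
    (hht : (IsLocalRing.maximalIdeal R).height ≤ 2) {α γ : R} (hα : Irreducible α)
    (hγ : Irreducible γ) (hαγ : ¬ Associated α γ) (x : K) :
    x ∈ AddSubmonoid.closure (twoPrimeFractions R K) := by
  have inj := IsFractionRing.injective R K
  obtain ⟨b, d, hd, rfl⟩ := IsFractionRing.div_surjective (A := R) x
  have hd0 : d ≠ 0 := nonZeroDivisors.ne_zero hd
  clear hd
  induction d using UniqueFactorizationMonoid.induction_on_prime generalizing b with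
  | h₁ => exact absurd rfl hd0
  | h₂ d hd =>
    -- Here `b / d` lies in `R`; it is rewritten with denominator `α ^ 1 * γ ^ 0`.
    obtain ⟨u, rfl⟩ := hd
    apply AddSubmonoid.subset_closure
    refine ⟨b * ↑u⁻¹ * α, α, γ, 1, 0, hα, hγ, hαγ, le_rfl, ?_⟩
    have hα' := (map_ne_zero_iff (algebraMap R K) inj).2 hα.ne_zero
    have hu' := (map_ne_zero_iff (algebraMap R K) inj).2 u.ne_zero
    have : algebraMap R K (↑u⁻¹ : R) = (algebraMap R K u)⁻¹ :=
      eq_inv_of_mul_eq_one_left (by rw [← map_mul, Units.inv_mul, map_one])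
    simp only [map_mul, map_pow, this]
    field_simp
  | h₃ d p hd hp ih =>
    have hy := ih b hd
    rw [map_mul, mul_comm, ← div_div, div_eq_mul_inv _ (algebraMap R K p)]
    generalize algebraMap R K b / algebraMap R K d = y at hy
    induction hy using AddSubmonoid.closure_induction with
    | mem y hy => exact mul_inv_mem_closure_of_mem hht hp.irreducible hy
    | zero => rw [zero_mul]; exact zero_mem _
    | add y z _ _ hy hz => rw [add_mul]; exact add_mem hy hz

end

/-- Every element of the fraction field of `k[[t₁,t₂]]` (for `k` a finite field) is a
finite sum of elements of the form `β / (α^m * γ^n)` with `β ∈ k[[t₁,t₂]]`, `α`, `γ`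
non-associated irreducible elements of `k[[t₁,t₂]]`, and `m + n ≥ 1`. -/
theorem fractionRing_mvPowerSeries_partial_fractions
    (k : Type*) [Field k] [Finite k]
    (x : FractionRing (MvPowerSeries (Fin 2) k)) :
    ∃ (N : ℕ) (β α γ : Fin N → MvPowerSeries (Fin 2) k) (m n : Fin N → ℕ),
      (∀ i, Irreducible (α i)) ∧ (∀ i, Irreducible (γ i)) ∧
      (∀ i, ¬ Associated (α i) (γ i)) ∧ (∀ i, 1 ≤ m i + n i) ∧
      x = ∑ i, algebraMap (MvPowerSeries (Fin 2) k) (FractionRing (MvPowerSeries (Fin 2) k)) (β i) *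
            (algebraMap (MvPowerSeries (Fin 2) k) (FractionRing (MvPowerSeries (Fin 2) k))
              (α i ^ m i * γ i ^ n i))⁻¹ := by
  have := NoZeroDivisors.to_isDomain (MvPowerSeries (Fin 2) k)
  have := mvPowerSeries_fin_two_ufm k
  have hx := mem_closure_twoPrimeFractions (mvPowerSeries_fin_two_height_le k)
    (mvPowerSeries_fin_two_prime_X_zero k).irreducible
    (mvPowerSeries_fin_two_prime_X_one k).irreducible
    (mvPowerSeries_fin_two_not_associated k) x
  obtain ⟨l, hl, rfl⟩ := AddSubmonoid.exists_list_of_mem_closure hx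
  choose β α γ m n h1 h2 h3 h4 h5 using fun i : Fin l.length => hl _ (l.get_mem i)
  refine ⟨l.length, β, α, γ, m, n, h1, h2, h3, h4, ?_⟩
  rw [← Fin.sum_univ_getElem]
  exact Finset.sum_congr rfl fun i _ => h5 i
end

section
/- Let k be a field, R := MvPowerSeries (Fin 2) k = k[[X,Y]], and let Ω := Ω¹_{R/k} be the module of Kähler differentials of R over k with universal derivation D. Let m := (X,Y) be the maximal ideal of R. Then for every f ∈ R, the element D f lies in the submodule Span_R{D X, D Y} ⊔ ⋂_{n ≥ 0} mⁿ • Ω of Ω. (Equivalently: modulo the intersection of the submodules mⁿ·Ω, the module Ω¹_{R/k} is generated by dX and dY.) -/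
/-!
The partial derivatives give a `k`-linear derivation `E f = df - f_X • dX - f_Y • dY` of `k[[X,Y]]`
into `Ω¹` which kills the constants, `X` and `Y`. Since every power series is `f = a + X g + Y h`
with `a ∈ k`, one has `E f = X • E g + Y • E h`, so that induction on `n` yields
`E f ∈ mⁿ • Ω¹` for all `f`. Finally `df = (f_X • dX + f_Y • dY) + E f`.
-/

theorem MvPowerSeries.exists_eq_C_add_X_mul_add_X_mul {k : Type*} [Field k]
    (f : MvPowerSeries (Fin 2) k) :
    ∃ (a : k) (g h : MvPowerSeries (Fin 2) k),
      f = MvPowerSeries.C a + MvPowerSeries.X 0 * g + MvPowerSeries.X 1 * h := by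
  classical
  -- the part of `f` not involving the first variable
  let r : MvPowerSeries (Fin 2) k := fun d => if d 0 = 0 then MvPowerSeries.coeff d f else 0
  have hr (d) : MvPowerSeries.coeff d r = if d 0 = 0 then MvPowerSeries.coeff d f else 0 := rfl
  have h0 : MvPowerSeries.X 0 ∣ f - r := by
    rw [MvPowerSeries.X_dvd_iff]
    intro d hd
    simp [hr, hd]
  have h1 : MvPowerSeries.X 1 ∣ r - MvPowerSeries.C (MvPowerSeries.coeff 0 f) := by
    rw [MvPowerSeries.X_dvd_iff]
    intro d hd
    rw [map_sub, hr, MvPowerSeries.coeff_C]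
    by_cases hd0 : d 0 = 0
    · have : d = 0 := by
        ext i
        fin_cases i <;> assumption
      subst this
      simp
    · have : d ≠ 0 := by
        rintro rfl
        exact hd0 rfl
      simp [hd0, this]
  obtain ⟨g, hg⟩ := h0
  obtain ⟨h, hh⟩ := h1
  exact ⟨_, g, h, by rw [← hg, ← hh]; ring⟩

/-- Each application of the decomposition `f = a + X g + Y h` gains one power of `(X, Y)`. -/
theorem Derivation.mem_span_X_pow_smul_top {k M : Type*} [Field k] [AddCommGroup M]
    [Module (MvPowerSeries (Fin 2) k) M] [Module k M]
    (E : Derivation k (MvPowerSeries (Fin 2) k) M)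
    (hX : E (MvPowerSeries.X 0) = 0) (hY : E (MvPowerSeries.X 1) = 0) (n : ℕ)
    (f : MvPowerSeries (Fin 2) k) :
    E f ∈ ((Ideal.span {MvPowerSeries.X (0 : Fin 2), MvPowerSeries.X (1 : Fin 2)} :
      Ideal (MvPowerSeries (Fin 2) k)) ^ n) • (⊤ : Submodule (MvPowerSeries (Fin 2) k) M) := by
  induction n generalizing f with
  | zero => simp
  | succ n ih =>
    obtain ⟨a, g, h, rfl⟩ := MvPowerSeries.exists_eq_C_add_X_mul_add_X_mul f
    have hC : E (MvPowerSeries.C a) = 0 := E.map_algebraMap a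
    rw [map_add, map_add, hC, E.leibniz, E.leibniz, hX, hY, smul_zero, smul_zero, zero_add,
      add_zero, add_zero, pow_succ', Submodule.mul_smul]
    exact add_mem (Submodule.smul_mem_smul (Ideal.subset_span (by simp)) (ih g))
      (Submodule.smul_mem_smul (Ideal.subset_span (by simp)) (ih h))


/-- Modulo the intersection of the submodules `mⁿ · Ω¹`, the Kähler differentials
`Ω¹_{k[[X,Y]]/k}` are generated by `dX` and `dY`: for every `f`, `df` lies in the
span of `dX, dY` together with `⋂ₙ mⁿ · Ω¹`. -/
theorem kaehlerDifferential_mvPowerSeries_generated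
    (k : Type*) [Field k] (f : MvPowerSeries (Fin 2) k) :
    KaehlerDifferential.D k (MvPowerSeries (Fin 2) k) f ∈
      Submodule.span (MvPowerSeries (Fin 2) k)
          {KaehlerDifferential.D k (MvPowerSeries (Fin 2) k) (MvPowerSeries.X (0 : Fin 2)),
           KaehlerDifferential.D k (MvPowerSeries (Fin 2) k) (MvPowerSeries.X (1 : Fin 2))} ⊔
        ⨅ n : ℕ,
          ((Ideal.span {MvPowerSeries.X (0 : Fin 2), MvPowerSeries.X (1 : Fin 2)} :
              Ideal (MvPowerSeries (Fin 2) k)) ^ n) •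
            (⊤ : Submodule (MvPowerSeries (Fin 2) k)
              (KaehlerDifferential k (MvPowerSeries (Fin 2) k))) := by
  set D := KaehlerDifferential.D k (MvPowerSeries (Fin 2) k)
  let E : Derivation k (MvPowerSeries (Fin 2) k) (KaehlerDifferential k (MvPowerSeries (Fin 2) k)) :=
    D - (LinearMap.toSpanSingleton (MvPowerSeries (Fin 2) k) _ (D (MvPowerSeries.X 0))).compDer
          (MvPowerSeries.pderiv k 0)
      - (LinearMap.toSpanSingleton (MvPowerSeries (Fin 2) k) _ (D (MvPowerSeries.X 1))).compDer
          (MvPowerSeries.pderiv k 1)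
  have hE (g) : E g = D g - MvPowerSeries.pderiv k 0 g • D (MvPowerSeries.X 0)
      - MvPowerSeries.pderiv k 1 g • D (MvPowerSeries.X 1) := rfl
  have hX : E (MvPowerSeries.X 0) = 0 := by
    rw [hE, MvPowerSeries.pderiv_X_self, MvPowerSeries.pderiv_X_of_ne (by decide)]
    simp
  have hY : E (MvPowerSeries.X 1) = 0 := by
    rw [hE, MvPowerSeries.pderiv_X_self, MvPowerSeries.pderiv_X_of_ne (by decide)]
    simp
  have hf : D f = (MvPowerSeries.pderiv k 0 f • D (MvPowerSeries.X 0)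
      + MvPowerSeries.pderiv k 1 f • D (MvPowerSeries.X 1)) + E f := by
    rw [hE]
    abel
  rw [hf]
  refine Submodule.add_mem_sup (Submodule.mem_span_pair.2 ⟨_, _, rfl⟩) ?_
  exact (Submodule.mem_iInf _).2 fun n => E.mem_span_X_pow_smul_top hX hY n f
end

section
/- Let p be a prime number and let A be a Noetherian local domain of characteristic p that is complete with respect to the adic topology of its maximal ideal, integrally closed in its fraction field, of Krull dimension 2, and whose residue field κ is finite. Then there exists an injective ring homomorphism φ : MvPowerSeries (Fin 2) κ → A such that A, regarded as a module over MvPowerSeries (Fin 2) κ via φ, is finitely generated. -/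
/-!
The proof is Cohen's: the ring `A` contains a copy of its residue field `κ`, and power series over
`κ` may be evaluated at a system of parameters of `A`.

Since `κ` is finite, of order `q` say, the copy of `κ` is elementary (`exists_coefficientField`): it
consists of the roots of `X ^ q - X` in `A`, which form a subring because `q` is a power of the
characteristic. Let `a₀, a₁` be a system of parameters (`exists_parameters`). Completeness gives a
ring homomorphism `φ : κ⟦t₀, t₁⟧ → A` with `φ tᵢ = aᵢ` (`exists_evalHom`).

The quotient `A ⧸ (a₀, a₁)` is a finite set, being a quotient of `A ⧸ 𝔪 ^ k` for some `k`. As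
`κ⟦t₀, t₁⟧` is complete and `A` is separated for the `(t₀, t₁)`-adic topology, lifts of the elements
of this quotient generate `A` as a module (`finite_of_quotient`).

Injectivity is a dimension count (`injective_of_finite`): the dimension of the domain `κ⟦t₀, t₁⟧` is
at most `2`, so a nonzero kernel would leave an image of dimension at most `1`, over which `A` is
integral, against `dim A = 2`.
-/

open IsLocalRing

/-- A complete local ring of characteristic `p` with finite residue field of order `q` contains a
copy of that field: the elements fixed by the `q`-power Frobenius form a subring, and reduction maps
it bijectively onto the residue field by Hensel's lemma for `X ^ q - X`. -/
theorem exists_coefficientField (p : ℕ) [Fact p.Prime] (A : Type*) [CommRing A] [IsLocalRing A]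
    [CharP A p] [IsAdicComplete (maximalIdeal A) A] [Finite (ResidueField A)] :
    Nonempty (ResidueField A →+* A) := by
  classical
  have : Fintype (ResidueField A) := Fintype.ofFinite _
  have : CharP (ResidueField A) p :=
    (CharP.charP_iff_prime_eq_zero Fact.out).mpr (by
      rw [← map_natCast (residue A), CharP.cast_eq_zero, map_zero])
  obtain ⟨n, -, hn⟩ := FiniteField.card (ResidueField A) p
  have hpn : p ^ (n : ℕ) ≠ 0 := pow_ne_zero _ (Fact.out : p.Prime).ne_zero
  let F : Subring A := (iterateFrobenius A p n).eqLocus (RingHom.id A)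
  have hF (a : A) : a ∈ F ↔ a ^ p ^ (n : ℕ) = a := by
    rw [RingHom.mem_eqLocus, iterateFrobenius_def, RingHom.id_apply]
  let r : F →+* ResidueField A := (residue A).comp F.subtype
  have hinj : Function.Injective r := by
    rw [injective_iff_map_eq_zero]
    rintro ⟨a, ha⟩ h
    rw [hF] at ha
    have ham : a ∈ maximalIdeal A := (residue_eq_zero_iff a).mp h
    have h1 : a * (1 - a ^ (p ^ (n : ℕ) - 1)) = 0 := by
      rw [mul_sub, mul_one, mul_pow_sub_one hpn, ha, sub_self]
    have hne : 1 < p ^ (n : ℕ) := Nat.one_lt_pow n.ne_zero (Fact.out : p.Prime).one_lt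
    have h2 : IsUnit (1 - a ^ (p ^ (n : ℕ) - 1)) := by
      refine (isUnit_or_isUnit_one_sub_self _).resolve_left ?_
      exact (mem_maximalIdeal _).mp (Ideal.pow_mem_of_mem _ ham _ (by omega))
    exact Subtype.ext (h2.mul_left_eq_zero.mp h1)
  have hsurj : Function.Surjective r := by
    intro x
    obtain ⟨b, rfl⟩ := residue_surjective x
    let f : Polynomial A := Polynomial.X ^ p ^ (n : ℕ) - Polynomial.X
    have hne : 1 < p ^ (n : ℕ) := Nat.one_lt_pow n.ne_zero (Fact.out : p.Prime).one_lt
    have hder : f.derivative = -1 := by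
      simp [f, Polynomial.derivative_X_pow]
    obtain ⟨a, ha, hab⟩ := HenselianRing.is_henselian (I := maximalIdeal A) f
      (Polynomial.monic_X_pow_sub (by rw [Polynomial.degree_X]; exact_mod_cast hne)) b
      (by
        rw [← residue_eq_zero_iff]
        simp [f, ← hn, FiniteField.pow_card])
      (by simp [hder])
    refine ⟨⟨a, (hF a).mpr (by simpa [f, sub_eq_zero] using ha)⟩, ?_⟩
    rw [← residue_eq_zero_iff, map_sub, sub_eq_zero] at hab
    exact hab
  exact ⟨F.subtype.comp (RingEquiv.ofBijective r ⟨hinj, hsurj⟩).symm.toRingHom⟩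

/-- Power series over any coefficient ring mapping to an `I`-adically complete ring `A` can be
evaluated at a finite family of elements of `I`. -/
theorem exists_evalHom {σ k A : Type*} [Finite σ] [CommRing k] [CommRing A] (I : Ideal A)
    [IsAdicComplete I A] (φ : k →+* A) (a : σ → A) (ha : ∀ i, a i ∈ I) :
    ∃ f : MvPowerSeries σ k →+* A, ∀ i, f (MvPowerSeries.X i) = a i := by
  let : WithIdeal A := ⟨I⟩
  let : UniformSpace k := ⊥
  have : DiscreteTopology k := ⟨rfl⟩
  have : IsUniformAddGroup k := inferInstance
  have h := (IsAdic.isAdicComplete_iff (R := A) (I := I) rfl).mp ‹_›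
  have := h.1
  have := h.2
  have hE : MvPowerSeries.HasEval a :=
    ⟨fun s ↦ WithIdeal.isTopologicallyNilpotent_of_mem (ha s), by simp [Filter.cofinite_eq_bot]⟩
  refine ⟨MvPowerSeries.eval₂Hom (φ := φ) continuous_of_discreteTopology hE, fun i ↦ ?_⟩
  rw [MvPowerSeries.coe_eval₂Hom, MvPowerSeries.eval₂_X]

/-- A Noetherian local ring of dimension `n` has a system of parameters: `n` elements of the maximal
ideal generating an ideal that contains one of its powers. -/
theorem exists_parameters (A : Type*) [CommRing A] [IsNoetherianRing A] [IsLocalRing A] (n : ℕ)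
    (hdim : ringKrullDim A = n) :
    ∃ a : Fin n → A, (∀ i, a i ∈ maximalIdeal A) ∧
      ∃ k, maximalIdeal A ^ k ≤ Ideal.span (Set.range a) := by
  obtain ⟨s, hs, hcard⟩ := (maximalIdeal A).exists_finset_card_eq_height_of_isNoetherianRing
  have hn : s.card = n := by
    have := maximalIdeal_height_eq_ringKrullDim (R := A)
    rw [← hcard, hdim] at this
    exact_mod_cast this
  let e := s.equivFinOfCardEq hn
  have hr : Set.range (fun i ↦ (e.symm i : A)) = s := by
    rw [← Function.comp_def, e.symm.surjective.range_comp]; simp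
  refine ⟨fun i ↦ e.symm i, fun i ↦ hs.1.2 (Ideal.subset_span (e.symm i).2), ?_⟩
  rw [hr]
  have := quotient_artinian_of_mem_minimalPrimes_of_isLocalRing _ hs
  exact exists_maximalIdeal_pow_le_of_isArtinianRing_quotient _

theorem isPrecomplete_pi {R ι : Type*} [CommRing R] [Finite ι] (I : Ideal R) [IsPrecomplete I R] :
    IsPrecomplete I (ι → R) := by
  classical
  have := Fintype.ofFinite ι
  refine ⟨fun f hf ↦ ?_⟩
  have key (i : ι) : ∃ L : R, ∀ n, f n i ≡ L [SMOD (I ^ n • ⊤ : Submodule R R)] :=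
    IsPrecomplete.prec ‹_› fun {m n} hmn ↦ by
      have := (hf hmn).map (LinearMap.proj (R := R) (φ := fun _ : ι ↦ R) i)
      refine this.mono ?_
      rw [Submodule.map_smul'']
      exact Submodule.smul_mono le_rfl le_top
  choose L hL using key
  refine ⟨L, fun n ↦ ?_⟩
  rw [SModEq.sub_mem, pi_eq_sum_univ (f n - L)]
  refine Submodule.sum_mem _ fun i _ ↦ Submodule.smul_mem_smul ?_ trivial
  simpa [SModEq.sub_mem] using hL i n

/-- The complete form of Nakayama's lemma, for a finite residue ring: representatives of the elements
of `S ⧸ I S` generate `S` over the `I`-adically precomplete ring `R`. -/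
theorem finite_of_quotient {R S : Type*} [CommRing R] [CommRing S] (I : Ideal R) (f : R →+* S)
    [IsPrecomplete I R] [IsHausdorff (I.map f) S] [Finite (S ⧸ I.map f)] : f.Finite := by
  classical
  let := f.toAlgebra
  change Module.Finite R S
  have : Fintype (S ⧸ I.map f) := Fintype.ofFinite _
  have : IsHausdorff I S := IsHausdorff.map_algebraMap_iff.mp ‹IsHausdorff (I.map f) S›
  have := isPrecomplete_pi (ι := S ⧸ I.map f) I
  let g : ((S ⧸ I.map f) → R) →ₗ[R] S := Fintype.linearCombination R Quotient.out
  refine Module.Finite.of_surjective g (surjective_of_mkQ_comp_surjective (I := I) fun y ↦ ?_)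
  obtain ⟨s, rfl⟩ := Submodule.mkQ_surjective _ y
  refine ⟨Pi.single (Ideal.Quotient.mk (I.map f) s) 1, ?_⟩
  rw [LinearMap.comp_apply, Submodule.mkQ_apply, Submodule.mkQ_apply, Submodule.Quotient.eq,
    Fintype.linearCombination_apply_single, one_smul, Ideal.smul_top_eq_map,
    Submodule.restrictScalars_mem, ← Ideal.Quotient.eq]
  exact Quotient.out_eq _

theorem powerSeries_ringKrullDim_le (R : Type*) [CommRing R] [IsNoetherianRing R] :
    ringKrullDim (PowerSeries R) ≤ ringKrullDim R + 1 := by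
  have hX : ({PowerSeries.X} : Set (PowerSeries R)) ⊆ Ring.jacobson (PowerSeries R) := by
    have := IsAdicComplete.le_jacobson_bot (Ideal.span {(PowerSeries.X : PowerSeries R)})
    rw [Ideal.span_le, Ideal.jacobson_bot] at this
    exact this
  refine (ringKrullDim_le_ringKrullDim_quotient_add_encard _ hX).trans ?_
  have hker : RingHom.ker (PowerSeries.constantCoeff (R := R)) = Ideal.span {PowerSeries.X} := by
    ext f
    rw [RingHom.mem_ker, Ideal.mem_span_singleton, PowerSeries.X_dvd_iff]
  rw [← hker, ringKrullDim_eq_of_ringEquiv (RingHom.quotientKerEquivOfSurjective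
    (f := PowerSeries.constantCoeff (R := R)) PowerSeries.constantCoeff_surj)]
  simp

theorem mvPowerSeries_ringKrullDim_le (k : Type*) [Field k] :
    ringKrullDim (MvPowerSeries (Fin 2) k) ≤ 2 := by
  rw [ringKrullDim_eq_of_ringEquiv (MvPowerSeries.finSuccEquiv k 1).toRingEquiv]
  refine (powerSeries_ringKrullDim_le _).trans ?_
  rw [ringKrullDim_eq_of_ringEquiv (MvPowerSeries.finSuccEquiv k 0).toRingEquiv]
  grw [powerSeries_ringKrullDim_le]
  rw [ringKrullDim_eq_of_ringEquiv (MvPowerSeries.isEmptyEquiv (Fin 0) k).toRingEquiv,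
    ringKrullDim_eq_zero_of_field]
  norm_num

/-- By incomparability, contraction of primes along an integral extension is strictly monotone. -/
theorem ringKrullDim_le_of_isIntegral (R S : Type*) [CommRing R] [CommRing S] [Algebra R S]
    [Algebra.IsIntegral R S] : ringKrullDim S ≤ ringKrullDim R :=
  Order.krullDim_le_of_strictMono (PrimeSpectrum.comap (algebraMap R S))
    fun _ _ h ↦ Ideal.IsIntegral.comap_lt_comap h

/-- A nonzero element of the kernel would make the image of `R`, hence also its integral extension
`S`, of smaller dimension than `R`. -/
theorem injective_of_finite {R S : Type*} [CommRing R] [NoZeroDivisors R] [CommRing S] (f : R →+* S)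
    (hf : f.Finite) (n : ℕ) (hR : ringKrullDim R ≤ n) (hS : ringKrullDim S = n) :
    Function.Injective f := by
  rw [injective_iff_map_eq_zero]
  by_contra! ⟨x, hx, hx0⟩
  have h1 := ringKrullDim_succ_le_of_surjective f.rangeRestrict f.rangeRestrict_surjective
    (r := x) (mem_nonZeroDivisors_of_ne_zero hx0) (Subtype.ext (by simpa using hx))
  have h2 : ringKrullDim S ≤ ringKrullDim f.range := by
    have : Algebra.IsIntegral f.range S := ⟨fun s ↦ by
      obtain ⟨P, hP, h⟩ := hf.to_isIntegral s
      refine ⟨P.map f.rangeRestrict, hP.map _, ?_⟩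
      rw [Polynomial.eval₂_map]
      exact h⟩
    exact ringKrullDim_le_of_isIntegral _ _
  rw [hS] at h2
  have h3 : (n : WithBot ℕ∞) + 1 ≤ n := by grw [h2] ; exact h1.trans hR
  have h4 : n + 1 ≤ n := by exact_mod_cast h3
  omega

/-- Cohen-structure-type statement (positive-characteristic analogue of Morrow's
Lemma 3.7): a complete two-dimensional Noetherian normal local domain `A` of prime
characteristic `p` with finite residue field `κ` admits an injective ring
homomorphism from `κ[[t₁,t₂]]` making `A` a finitely generated module over
`κ[[t₁,t₂]]`. -/
theorem exists_powerSeries_subring_module_finite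
    (p : ℕ) (hp : p.Prime) (A : Type*) [CommRing A] [IsNoetherianRing A] [IsLocalRing A]
    [IsDomain A] [IsIntegrallyClosed A] [CharP A p]
    [IsAdicComplete (IsLocalRing.maximalIdeal A) A]
    (hdim : ringKrullDim A = 2) [Finite (IsLocalRing.ResidueField A)] :
    ∃ φ : MvPowerSeries (Fin 2) (IsLocalRing.ResidueField A) →+* A,
      Function.Injective φ ∧
      (letI : Algebra (MvPowerSeries (Fin 2) (IsLocalRing.ResidueField A)) A := φ.toAlgebra
       Module.Finite (MvPowerSeries (Fin 2) (IsLocalRing.ResidueField A)) A) := by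
  have : Fact p.Prime := ⟨hp⟩
  obtain ⟨σ⟩ := exists_coefficientField p A
  obtain ⟨a, ha, k, hk⟩ := exists_parameters A 2 hdim
  obtain ⟨φ, hφ⟩ := exists_evalHom (maximalIdeal A) σ a ha
  let I : Ideal (MvPowerSeries (Fin 2) (ResidueField A)) := .span (.range MvPowerSeries.X)
  have hI : I.map φ = Ideal.span (Set.range a) := by
    rw [Ideal.map_span, ← Set.range_comp]
    congr 2
    exact funext hφ
  have hIA : I.map φ ≠ ⊤ := by
    rw [hI]
    exact ne_top_of_le_ne_top Ideal.IsPrime.ne_top'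
      (Ideal.span_le.mpr (Set.range_subset_iff.mpr ha) : _ ≤ maximalIdeal A)
  have : IsHausdorff (I.map φ) A := .of_isLocalRing _ A hIA
  have : Finite (A ⧸ I.map φ) := finite_quotient_iff.mpr ⟨k, hI ▸ hk⟩
  have hfin : φ.Finite := finite_of_quotient I φ
  exact ⟨φ, injective_of_finite φ hfin 2 (mvPowerSeries_ringKrullDim_le _) hdim, hfin⟩
end

section
/- Let K be a field, F := K((t₁))((t₂)), and let f, g, h ∈ F be nonzero. With b_f := v₂(g)v₁(h) − v₂(h)v₁(g), b_g := v₂(f)v₁(h) − v₂(h)v₁(f), b_h := v₂(f)v₁(g) − v₂(g)v₁(f), the element u := f^{b_f} · g^{−b_g} · h^{b_h} of F satisfies v₂(u) = 0 and v₁(u) = 0. Consequently the higher tame symbol T(f,g,h) is a nonzero element of K. -/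
/-!
Both `v2` and `v1` are homomorphisms from the multiplicative group of `K((t₁))((t₂))` to `ℤ`:
over a domain the order of a Hahn series is additive under products, and its leading coefficient
is multiplicative. Hence `v(u) = b_f v(f) - b_g v(g) + b_h v(h)`, and for `v = v2` or `v = v1` this
is the expansion along the first row of a `3 × 3` determinant with two equal rows, so it vanishes.

The sign does not change either order, since a homomorphism to the torsion-free group `ℤ` kills
`-1`. An element with both orders zero has its `t₁⁰` coefficient of its `t₂⁰` coefficient as its
iterated leading coefficient, and this is nonzero when the element is.
-/

/-- The outer order `v₂` of an iterated Laurent series. -/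
noncomputable def v2 {K : Type*} [Field K] (f : LaurentSeries (LaurentSeries K)) : ℤ :=
  f.order

/-- The inner order `v₁` of an iterated Laurent series: the order (in `t₁`) of the
leading coefficient (in `t₂`). -/
noncomputable def v1 {K : Type*} [Field K] (f : LaurentSeries (LaurentSeries K)) : ℤ :=
  (f.coeff f.order).order

/-- The higher tame symbol of Parshin with the Fesenko–Vostokov sign. -/
noncomputable def tameSymbol {K : Type*} [Field K]
    (f g h : LaurentSeries (LaurentSeries K)) : K :=
  ((((-1 : LaurentSeries (LaurentSeries K)) ^
        (v2 f * v2 g * v1 h + v2 f * v2 h * v1 g + v2 g * v2 h * v1 f +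
          v2 f * v1 g * v1 h + v2 g * v1 f * v1 h + v2 h * v1 f * v1 g) *
      f ^ (v2 g * v1 h - v2 h * v1 g) *
      g ^ (-(v2 f * v1 h - v2 h * v1 f)) *
      h ^ (v2 f * v1 g - v2 g * v1 f)).coeff 0).coeff 0)

/-- The constant embedding `K → K((t₁))((t₂))`. -/
noncomputable def constF {K : Type*} [Field K] (c : K) : LaurentSeries (LaurentSeries K) :=
  HahnSeries.C (HahnSeries.C c)

/-- The inner uniformizer `t₁` viewed as an element of `K((t₁))((t₂))`. -/
noncomputable def tau1 (K : Type*) [Field K] : LaurentSeries (LaurentSeries K) :=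
  HahnSeries.C (HahnSeries.single (1 : ℤ) (1 : K))

/-- The outer uniformizer `t₂` of `K((t₁))((t₂))`. -/
noncomputable def tau2 (K : Type*) [Field K] : LaurentSeries (LaurentSeries K) :=
  HahnSeries.single (1 : ℤ) (1 : LaurentSeries K)

/-- A function that is additive on products of nonzero elements is compatible with integer
powers. -/
lemma map_zpow_of_map_mul {F : Type*} [Field F] (v : F → ℤ)
    (hv : ∀ x y : F, x ≠ 0 → y ≠ 0 → v (x * y) = v x + v y) (x : F) (hx : x ≠ 0) (n : ℤ) :
    v (x ^ n) = n * v x := by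
  induction n with
  | zero => simpa using hv 1 1 one_ne_zero one_ne_zero
  | succ n ih => rw [zpow_add_one₀ hx, hv _ _ (zpow_ne_zero _ hx) hx, ih]; ring
  | pred n ih =>
    have key := hv (x ^ (-(n : ℤ) - 1)) x (zpow_ne_zero _ hx) hx
    rw [← zpow_add_one₀ hx, sub_add_cancel, ih] at key
    linarith

lemma map_neg_one_of_map_mul {F : Type*} [Field F] (v : F → ℤ)
    (hv : ∀ x y : F, x ≠ 0 → y ≠ 0 → v (x * y) = v x + v y) : v (-1) = 0 := by
  have h1 := hv 1 1 one_ne_zero one_ne_zero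
  have h2 := hv (-1) (-1) (by simp) (by simp)
  rw [one_mul] at h1
  rw [neg_one_mul, neg_neg] at h2
  linarith

lemma map_unit_part_of_map_mul {F : Type*} [Field F] (v : F → ℤ)
    (hv : ∀ x y : F, x ≠ 0 → y ≠ 0 → v (x * y) = v x + v y)
    (f g h : F) (hf : f ≠ 0) (hg : g ≠ 0) (hh : h ≠ 0) (a b c : ℤ) :
    v (f ^ a * g ^ b * h ^ c) = a * v f + b * v g + c * v h := by
  rw [hv _ _ (mul_ne_zero (zpow_ne_zero _ hf) (zpow_ne_zero _ hg)) (zpow_ne_zero _ hh),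
    hv _ _ (zpow_ne_zero _ hf) (zpow_ne_zero _ hg), map_zpow_of_map_mul v hv f hf,
    map_zpow_of_map_mul v hv g hg, map_zpow_of_map_mul v hv h hh]

lemma v2_mul {K : Type*} [Field K] (x y : LaurentSeries (LaurentSeries K))
    (hx : x ≠ 0) (hy : y ≠ 0) : v2 (x * y) = v2 x + v2 y :=
  HahnSeries.order_mul hx hy

lemma v1_mul {K : Type*} [Field K] (x y : LaurentSeries (LaurentSeries K))
    (hx : x ≠ 0) (hy : y ≠ 0) : v1 (x * y) = v1 x + v1 y := by
  simp only [v1, ← HahnSeries.leadingCoeff_eq, HahnSeries.leadingCoeff_mul]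
  exact HahnSeries.order_mul (HahnSeries.leadingCoeff_ne_zero.2 hx)
    (HahnSeries.leadingCoeff_ne_zero.2 hy)

/-- An element with both orders zero has its iterated leading coefficient at `t₁⁰ t₂⁰`. -/
lemma coeff_coeff_ne_zero {K : Type*} [Field K] (x : LaurentSeries (LaurentSeries K))
    (hx : x ≠ 0) (h2 : v2 x = 0) (h1 : v1 x = 0) : (x.coeff 0).coeff 0 ≠ 0 := by
  unfold v2 at h2
  unfold v1 at h1
  rw [h2] at h1
  have hl := HahnSeries.leadingCoeff_ne_zero.2 hx
  rw [HahnSeries.leadingCoeff_eq, h2] at hl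
  have hl' := HahnSeries.leadingCoeff_ne_zero.2 hl
  rwa [HahnSeries.leadingCoeff_eq, h1] at hl'

/-- The unit part `u := f^{b_f} g^{-b_g} h^{b_h}` of the higher tame symbol has both
orders zero, and consequently the higher tame symbol is a nonzero element of `K`. -/
theorem tameSymbol_unit_part_orders_eq_zero_and_ne_zero {K : Type*} [Field K]
    (f g h : LaurentSeries (LaurentSeries K)) (hf : f ≠ 0) (hg : g ≠ 0) (hh : h ≠ 0) :
    v2 (f ^ (v2 g * v1 h - v2 h * v1 g) * g ^ (-(v2 f * v1 h - v2 h * v1 f)) *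
        h ^ (v2 f * v1 g - v2 g * v1 f)) = 0 ∧
    v1 (f ^ (v2 g * v1 h - v2 h * v1 g) * g ^ (-(v2 f * v1 h - v2 h * v1 f)) *
        h ^ (v2 f * v1 g - v2 g * v1 f)) = 0 ∧
    tameSymbol f g h ≠ 0 := by
  have e2 : v2 (f ^ (v2 g * v1 h - v2 h * v1 g) * g ^ (-(v2 f * v1 h - v2 h * v1 f)) *
      h ^ (v2 f * v1 g - v2 g * v1 f)) = 0 := by
    rw [map_unit_part_of_map_mul v2 v2_mul f g h hf hg hh]; ring
  have e1 : v1 (f ^ (v2 g * v1 h - v2 h * v1 g) * g ^ (-(v2 f * v1 h - v2 h * v1 f)) *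
      h ^ (v2 f * v1 g - v2 g * v1 f)) = 0 := by
    rw [map_unit_part_of_map_mul v1 v1_mul f g h hf hg hh]; ring
  refine ⟨e2, e1, ?_⟩
  have hu := mul_ne_zero (mul_ne_zero (zpow_ne_zero (v2 g * v1 h - v2 h * v1 g) hf)
    (zpow_ne_zero (-(v2 f * v1 h - v2 h * v1 f)) hg)) (zpow_ne_zero (v2 f * v1 g - v2 g * v1 f) hh)
  have hm : (-1 : LaurentSeries (LaurentSeries K)) ≠ 0 := neg_ne_zero.2 one_ne_zero
  have hs := zpow_ne_zero (v2 f * v2 g * v1 h + v2 f * v2 h * v1 g + v2 g * v2 h * v1 f +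
    v2 f * v1 g * v1 h + v2 g * v1 f * v1 h + v2 h * v1 f * v1 g) hm
  unfold tameSymbol
  -- Reassociate so that the sign multiplies the unit part as a single factor.
  rw [mul_assoc, mul_assoc, ← mul_assoc (f ^ _)]
  apply coeff_coeff_ne_zero _ (mul_ne_zero hs hu)
  · rw [v2_mul _ _ hs hu, e2, map_zpow_of_map_mul v2 v2_mul _ hm,
      map_neg_one_of_map_mul v2 v2_mul, mul_zero, add_zero]
  · rw [v1_mul _ _ hs hu, e1, map_zpow_of_map_mul v1 v1_mul _ hm,
      map_neg_one_of_map_mul v1 v1_mul, mul_zero, add_zero]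
end

section
/- Let K be a field and F := K((t₁))((t₂)). Call a nonzero u ∈ F a principal unit if v₂(u) = 0, v₁(u) = 0, and the coefficient of t₁^0 in the coefficient of t₂^0 of u equals 1. Then for all nonzero f, g, h ∈ F: if any one of f, g, h is a principal unit, the higher tame symbol T(f,g,h) equals 1. -/
/-- `u` is a principal unit of `K((t₁))((t₂))`: both orders vanish and the constant
term is `1`. -/
def IsPrincipalUnit {K : Type*} [Field K] (u : LaurentSeries (LaurentSeries K)) : Prop :=
  u ≠ 0 ∧ v2 u = 0 ∧ v1 u = 0 ∧ ((u.coeff 0).coeff 0) = 1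

namespace HahnSeries

variable {L : Type*} [Field L]

/-- The leading coefficient as a multiplicative map, so that it commutes with integer powers. -/
noncomputable def leadingCoeffHom (L : Type*) [Field L] : LaurentSeries L →*₀ L where
  toFun := leadingCoeff
  map_zero' := leadingCoeff_zero
  map_one' := leadingCoeff_one
  map_mul' x y := leadingCoeff_mul x y

lemma leadingCoeff_zpow (x : LaurentSeries L) (n : ℤ) :
    (x ^ n).leadingCoeff = x.leadingCoeff ^ n :=
  map_zpow₀ (leadingCoeffHom L) x n

lemma order_zpow_eq_zero {x : LaurentSeries L} (hx : x ≠ 0) (h : x.order = 0) (n : ℤ) :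
    (x ^ n).order = 0 := by
  obtain ⟨m, rfl | rfl⟩ := n.eq_nat_or_neg
  · simp [h]
  · have key := order_mul (zpow_ne_zero (-(m : ℤ)) hx) (pow_ne_zero m hx)
    rw [zpow_neg, zpow_natCast, inv_mul_cancel₀ (pow_ne_zero m hx), order_one, order_pow, h,
      smul_zero, add_zero] at key
    rw [zpow_neg, zpow_natCast, ← key]

lemma coeff_zero_zpow {x : LaurentSeries L} (hx : x ≠ 0) (h : x.order = 0) (n : ℤ) :
    (x ^ n).coeff 0 = x.leadingCoeff ^ n := by
  rw [← leadingCoeff_zpow, leadingCoeff_eq, order_zpow_eq_zero hx h]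

end HahnSeries

/-- Integer powers of a principal unit have constant term `1`. -/
lemma IsPrincipalUnit.coeff_zpow {K : Type*} [Field K] {u : LaurentSeries (LaurentSeries K)}
    (hu : IsPrincipalUnit u) (n : ℤ) : ((u ^ n).coeff 0).coeff 0 = 1 := by
  obtain ⟨h0, h2, h1, hc⟩ := hu
  have h2' : u.order = 0 := h2
  have h1' : u.leadingCoeff.order = 0 := by rw [HahnSeries.leadingCoeff_eq]; exact h1
  have hl : u.coeff 0 = u.leadingCoeff := by rw [HahnSeries.leadingCoeff_eq, h2']
  have hl0 : u.leadingCoeff ≠ 0 := HahnSeries.leadingCoeff_ne_zero.2 h0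
  have hc' : u.leadingCoeff.leadingCoeff = 1 := by
    rw [HahnSeries.leadingCoeff_eq, h1', ← hl, hc]
  rw [HahnSeries.coeff_zero_zpow h0 h2', HahnSeries.coeff_zero_zpow hl0 h1', hc', one_zpow]

/-- The higher tame symbol is trivial if any entry is a principal unit. -/
theorem tameSymbol_eq_one_of_isPrincipalUnit {K : Type*} [Field K]
    (f g h : LaurentSeries (LaurentSeries K)) (hf : f ≠ 0) (hg : g ≠ 0) (hh : h ≠ 0)
    (hp : IsPrincipalUnit f ∨ IsPrincipalUnit g ∨ IsPrincipalUnit h) :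
    tameSymbol f g h = 1 := by
  unfold tameSymbol
  rcases hp with hp | hp | hp
  all_goals
    obtain ⟨-, h2, h1, -⟩ := id hp
    simp only [h2, h1, mul_zero, zero_mul, add_zero, sub_zero, neg_zero, zpow_zero, mul_one,
      one_mul]
    exact hp.coeff_zpow _
end

section
/- Let K be a field and F := K((t₁))((t₂)). Then for all nonzero f, h ∈ F, the higher tame symbol satisfies T(f, f, h) = T(−1, f, h), where −1 denotes the constant −1 in F. -/
theorem v2_neg_one {K : Type*} [Field K] : v2 (-1 : LaurentSeries (LaurentSeries K)) = 0 := by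
  simp [v2]

theorem v1_neg_one {K : Type*} [Field K] : v1 (-1 : LaurentSeries (LaurentSeries K)) = 0 := by
  simp [v1]

/-- The sign of `T(f, f, h)`, for `f` of orders `(a, b)` and `h` of orders `(c, d)`. -/
theorem neg_one_zpow_self_exponent {F : Type*} [Field F] (a b c d : ℤ) :
    (-1 : F) ^ (a * a * d + a * c * b + a * c * b + a * b * d + a * b * d + c * b * b) =
      (-1) ^ (a * d - c * b) := by
  -- The exponents differ by an even number, as `a * (a - 1)` and `b * (b + 1)` are even.
  obtain ⟨m, hm⟩ := Int.even_mul_pred_self a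
  obtain ⟨n, hn⟩ := Int.even_mul_succ_self b
  have hexp : a * a * d + a * c * b + a * c * b + a * b * d + a * b * d + c * b * b =
      (a * d - c * b) + 2 * (m * d + a * c * b + a * b * d + c * n) := by
    linear_combination d * hm + c * hn
  rw [hexp, zpow_add₀ (neg_ne_zero.mpr one_ne_zero), (even_two_mul _).neg_one_zpow, mul_one]

/-- The explicit-symbol form of the K-group relation `{t,t} = {t,-1}`. -/
theorem tameSymbol_self_eq_tameSymbol_neg_one {K : Type*} [Field K]
    (f h : LaurentSeries (LaurentSeries K)) (hf : f ≠ 0) (hh : h ≠ 0) :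
    tameSymbol f f h = tameSymbol (-1) f h := by
  unfold tameSymbol
  rw [v2_neg_one, v1_neg_one]
  generalize v2 f = a
  generalize v1 f = b
  generalize v2 h = c
  generalize v1 h = d
  congr 2
  rw [neg_one_zpow_self_exponent, mul_assoc ((-1) ^ (a * d - c * b)), ← zpow_add₀ hf]
  simp
end

section
/- Let K be a field and F := K((t₁))((t₂)). Let τ₂ ∈ F be the outer uniformizer t₂ and τ₁ ∈ F the inner uniformizer t₁ viewed as a constant Laurent series in t₂. For i = 1, 2, 3 let c_i ∈ K with c_i ≠ 0 and let a_i, b_i ∈ ℤ, and set f_i := ĉ_i · τ₁^{a_i} · τ₂^{b_i} and f'_i := ĉ_i · τ₁^{b_i} · τ₂^{a_i} (the same monomial with the exponents of the two variables exchanged). Then the higher tame symbols satisfy the reciprocity relation T(f₁, f₂, f₃) · T(f'₁, f'₂, f'₃) = 1 in K. -/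
lemma laurent_single_zpow {R : Type*} [Field R] (a : ℤ) (c : R) (n : ℤ) :
    (HahnSeries.single a c : LaurentSeries R) ^ n = HahnSeries.single (n * a) (c ^ n) := by
  cases n with
  | ofNat n => simp [HahnSeries.single_pow]
  | negSucc n =>
    rw [zpow_negSucc, zpow_negSucc, HahnSeries.single_pow, HahnSeries.inv_single, nsmul_eq_mul,
      ← neg_mul]
    rfl

lemma monomial_eq_single {K : Type*} [Field K] (c : K) (a b : ℤ) :
    constF c * tau1 K ^ a * tau2 K ^ b = HahnSeries.single b (HahnSeries.single a c) := by
  have h1 : tau1 K ^ a = HahnSeries.C (HahnSeries.single a (1 : K)) := by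
    rw [tau1, ← map_zpow₀, laurent_single_zpow]; simp
  have h2 : tau2 K ^ b = HahnSeries.single b (1 : LaurentSeries K) := by
    rw [tau2, laurent_single_zpow]; simp
  rw [h1, h2, constF, ← map_mul]
  simp [HahnSeries.C_apply, HahnSeries.single_mul_single]

lemma v2_monomial {K : Type*} [Field K] {c : K} (hc : c ≠ 0) (a b : ℤ) :
    v2 (constF c * tau1 K ^ a * tau2 K ^ b) = b := by
  rw [v2, monomial_eq_single, HahnSeries.order_single (by simpa using hc)]

lemma v1_monomial {K : Type*} [Field K] {c : K} (hc : c ≠ 0) (a b : ℤ) :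
    v1 (constF c * tau1 K ^ a * tau2 K ^ b) = a := by
  rw [v1, monomial_eq_single, HahnSeries.order_single (by simpa using hc),
    HahnSeries.coeff_single_same, HahnSeries.order_single hc]

lemma tameSymbol_monomial {K : Type*} [Field K]
    {c₁ c₂ c₃ : K} (hc₁ : c₁ ≠ 0) (hc₂ : c₂ ≠ 0) (hc₃ : c₃ ≠ 0)
    (a₁ a₂ a₃ b₁ b₂ b₃ : ℤ) :
    tameSymbol (constF c₁ * tau1 K ^ a₁ * tau2 K ^ b₁)
        (constF c₂ * tau1 K ^ a₂ * tau2 K ^ b₂)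
        (constF c₃ * tau1 K ^ a₃ * tau2 K ^ b₃) =
      (-1) ^ (b₁ * b₂ * a₃ + b₁ * b₃ * a₂ + b₂ * b₃ * a₁ +
          b₁ * a₂ * a₃ + b₂ * a₁ * a₃ + b₃ * a₁ * a₂) *
        c₁ ^ (b₂ * a₃ - b₃ * a₂) * c₂ ^ (-(b₁ * a₃ - b₃ * a₁)) * c₃ ^ (b₁ * a₂ - b₂ * a₁) := by
  simp only [tameSymbol, v2_monomial hc₁, v2_monomial hc₂, v2_monomial hc₃,
    v1_monomial hc₁, v1_monomial hc₂, v1_monomial hc₃]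
  generalize b₁ * b₂ * a₃ + b₁ * b₃ * a₂ + b₂ * b₃ * a₁ +
          b₁ * a₂ * a₃ + b₂ * a₁ * a₃ + b₃ * a₁ * a₂ = α
  have hsign : (-1 : LaurentSeries (LaurentSeries K)) ^ α =
      HahnSeries.single 0 (HahnSeries.single 0 ((-1 : K) ^ α)) := by
    change _ = HahnSeries.C (HahnSeries.C ((-1 : K) ^ α))
    simp
  simp only [monomial_eq_single, laurent_single_zpow, hsign, HahnSeries.single_mul_single]
  -- The exponents of `τ₁` and `τ₂` vanish by expanding a determinant with a repeated column.
  have ht₁ : 0 + (b₂ * a₃ - b₃ * a₂) * a₁ + -(b₁ * a₃ - b₃ * a₁) * a₂ +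
      (b₁ * a₂ - b₂ * a₁) * a₃ = 0 := by ring
  have ht₂ : 0 + (b₂ * a₃ - b₃ * a₂) * b₁ + -(b₁ * a₃ - b₃ * a₁) * b₂ +
      (b₁ * a₂ - b₂ * a₁) * b₃ = 0 := by ring
  simp only [ht₁, ht₂, HahnSeries.coeff_single_same]

/-- Reciprocity around a point for monomial entries: the symbol computed with the
two coordinates in one order, times the symbol with the coordinates exchanged,
equals one. -/
theorem tameSymbol_monomial_reciprocity {K : Type*} [Field K]
    (c₁ c₂ c₃ : K) (hc₁ : c₁ ≠ 0) (hc₂ : c₂ ≠ 0) (hc₃ : c₃ ≠ 0)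
    (a₁ a₂ a₃ b₁ b₂ b₃ : ℤ) :
    tameSymbol (constF c₁ * tau1 K ^ a₁ * tau2 K ^ b₁)
        (constF c₂ * tau1 K ^ a₂ * tau2 K ^ b₂)
        (constF c₃ * tau1 K ^ a₃ * tau2 K ^ b₃) *
      tameSymbol (constF c₁ * tau1 K ^ b₁ * tau2 K ^ a₁)
        (constF c₂ * tau1 K ^ b₂ * tau2 K ^ a₂)
        (constF c₃ * tau1 K ^ b₃ * tau2 K ^ a₃) = 1 := by
  rw [tameSymbol_monomial hc₁ hc₂ hc₃, tameSymbol_monomial hc₁ hc₂ hc₃]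
  have hα : a₁ * a₂ * b₃ + a₁ * a₃ * b₂ + a₂ * a₃ * b₁ +
      a₁ * b₂ * b₃ + a₂ * b₁ * b₃ + a₃ * b₁ * b₂ =
      b₁ * b₂ * a₃ + b₁ * b₃ * a₂ + b₂ * b₃ * a₁ +
      b₁ * a₂ * a₃ + b₂ * a₁ * a₃ + b₃ * a₁ * a₂ := by ring
  have h₁ : a₂ * b₃ - a₃ * b₂ = -(b₂ * a₃ - b₃ * a₂) := by ring
  have h₂ : a₁ * b₃ - a₃ * b₁ = -(b₁ * a₃ - b₃ * a₁) := by ring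
  have h₃ : a₁ * b₂ - a₂ * b₁ = -(b₁ * a₂ - b₂ * a₁) := by ring
  rw [hα, h₁, h₂, h₃]
  generalize b₁ * b₂ * a₃ + b₁ * b₃ * a₂ + b₂ * b₃ * a₁ +
      b₁ * a₂ * a₃ + b₂ * a₁ * a₃ + b₃ * a₁ * a₂ = α
  generalize b₂ * a₃ - b₃ * a₂ = m₁
  generalize b₁ * a₃ - b₃ * a₁ = m₂
  generalize b₁ * a₂ - b₂ * a₁ = m₃
  have hs : (-1 : K) ^ α * (-1) ^ α = 1 := by rw [← mul_zpow]; simp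
  have e₁ : c₁ ^ m₁ * c₁ ^ (-m₁) = 1 := by rw [← zpow_add₀ hc₁]; simp
  have e₂ : c₂ ^ (-m₂) * c₂ ^ (- -m₂) = 1 := by rw [← zpow_add₀ hc₂]; simp
  have e₃ : c₃ ^ m₃ * c₃ ^ (-m₃) = 1 := by rw [← zpow_add₀ hc₃]; simp
  calc _ = ((-1 : K) ^ α * (-1) ^ α) * (c₁ ^ m₁ * c₁ ^ (-m₁)) *
        (c₂ ^ (-m₂) * c₂ ^ (- -m₂)) * (c₃ ^ m₃ * c₃ ^ (-m₃)) := by ac_rfl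
    _ = 1 := by rw [hs, e₁, e₂, e₃]; simp
end

section
/- Let K be a field and F := K((t₁))((t₂)). The higher tame symbol is antisymmetric in its first two arguments: for all nonzero f, g, h ∈ F, T(g, f, h) = T(f, g, h)⁻¹ in K. -/
namespace TameSymbolAux

/-- The leading coefficient of a Laurent series over a field, as a multiplicative map. -/
noncomputable def leadHom (k : Type*) [Field k] : LaurentSeries k →*₀ k where
  toFun x := x.leadingCoeff
  map_zero' := HahnSeries.leadingCoeff_zero
  map_one' := HahnSeries.leadingCoeff_one
  map_mul' x y := HahnSeries.leadingCoeff_mul x y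

theorem leadHom_apply {k : Type*} [Field k] (x : LaurentSeries k) :
    leadHom k x = x.coeff x.order := HahnSeries.leadingCoeff_eq

theorem order_inv {k : Type*} [Field k] (x : LaurentSeries k) : x⁻¹.order = -x.order := by
  by_cases hx : x = 0
  · simp [hx]
  · have h := HahnSeries.order_mul hx (inv_ne_zero hx)
    rw [mul_inv_cancel₀ hx, HahnSeries.order_one] at h
    omega

theorem order_zpow {k : Type*} [Field k] (x : LaurentSeries k) (n : ℤ) :
    (x ^ n).order = n * x.order := by
  cases n with
  | ofNat n => simp
  | negSucc n =>
    rw [zpow_negSucc, order_inv, HahnSeries.order_pow, nsmul_eq_mul, Int.negSucc_eq]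
    push_cast
    ring

theorem order_neg_one_zpow {k : Type*} [Field k] (n : ℤ) :
    ((-1 : LaurentSeries k) ^ n).order = 0 := by
  rw [order_zpow, HahnSeries.order_neg, HahnSeries.order_one, mul_zero]

variable {K : Type*} [Field K]

theorem v1_eq (f : LaurentSeries (LaurentSeries K)) :
    v1 f = (leadHom (LaurentSeries K) f).order := by
  rw [leadHom_apply, v1]

/-- The element of `K((t₁))((t₂))` whose constant term is the higher tame symbol. -/
noncomputable def tameElem (f g h : LaurentSeries (LaurentSeries K)) :
    LaurentSeries (LaurentSeries K) :=
  (-1 : LaurentSeries (LaurentSeries K)) ^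
      (v2 f * v2 g * v1 h + v2 f * v2 h * v1 g + v2 g * v2 h * v1 f +
        v2 f * v1 g * v1 h + v2 g * v1 f * v1 h + v2 h * v1 f * v1 g) *
    f ^ (v2 g * v1 h - v2 h * v1 g) *
    g ^ (-(v2 f * v1 h - v2 h * v1 f)) *
    h ^ (v2 f * v1 g - v2 g * v1 f)

theorem tameElem_swap (f g h : LaurentSeries (LaurentSeries K)) :
    tameElem g f h = (tameElem f g h)⁻¹ := by
  have sign (n : ℤ) : ((-1 : LaurentSeries (LaurentSeries K)) ^ n)⁻¹ = (-1) ^ n := by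
    have h1 : (-1 : LaurentSeries (LaurentSeries K)) * -1 = 1 := by ring
    rw [← inv_zpow, inv_eq_of_mul_eq_one_left h1]
  simp only [tameElem, mul_inv, sign, ← zpow_neg, neg_sub]
  rw [mul_right_comm (_ ^ _) (g ^ _) (f ^ _)]
  congr 4
  ring

theorem order_tameElem {f g h : LaurentSeries (LaurentSeries K)}
    (hf : f ≠ 0) (hg : g ≠ 0) (hh : h ≠ 0) : (tameElem f g h).order = 0 := by
  have hs : (-1 : LaurentSeries (LaurentSeries K)) ≠ 0 := neg_ne_zero.mpr one_ne_zero
  have hf' := fun n : ℤ => zpow_ne_zero n hf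
  have hg' := fun n : ℤ => zpow_ne_zero n hg
  have hh' := fun n : ℤ => zpow_ne_zero n hh
  have hs' := fun n : ℤ => zpow_ne_zero n hs
  rw [tameElem, HahnSeries.order_mul (mul_ne_zero (mul_ne_zero (hs' _) (hf' _)) (hg' _)) (hh' _),
    HahnSeries.order_mul (mul_ne_zero (hs' _) (hf' _)) (hg' _),
    HahnSeries.order_mul (hs' _) (hf' _), order_neg_one_zpow, order_zpow, order_zpow, order_zpow]
  simp only [v2]
  ring

theorem order_leadHom_tameElem {f g h : LaurentSeries (LaurentSeries K)}
    (hf : f ≠ 0) (hg : g ≠ 0) (hh : h ≠ 0) :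
    (leadHom (LaurentSeries K) (tameElem f g h)).order = 0 := by
  have hs : (-1 : LaurentSeries K) ≠ 0 := neg_ne_zero.mpr one_ne_zero
  have hf' := fun n : ℤ => zpow_ne_zero n ((map_ne_zero (leadHom (LaurentSeries K))).mpr hf)
  have hg' := fun n : ℤ => zpow_ne_zero n ((map_ne_zero (leadHom (LaurentSeries K))).mpr hg)
  have hh' := fun n : ℤ => zpow_ne_zero n ((map_ne_zero (leadHom (LaurentSeries K))).mpr hh)
  have hs' := fun n : ℤ => zpow_ne_zero n hs
  have hneg : leadHom (LaurentSeries K) (-1) = -1 := by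
    simp [leadHom_apply, HahnSeries.order_neg]
  simp only [tameElem, map_mul, map_zpow₀, hneg]
  rw [HahnSeries.order_mul (mul_ne_zero (mul_ne_zero (hs' _) (hf' _)) (hg' _)) (hh' _),
    HahnSeries.order_mul (mul_ne_zero (hs' _) (hf' _)) (hg' _),
    HahnSeries.order_mul (hs' _) (hf' _), order_neg_one_zpow, order_zpow, order_zpow, order_zpow]
  simp only [← v1_eq]
  ring

theorem tameSymbol_eq_lead {f g h : LaurentSeries (LaurentSeries K)}
    (hf : f ≠ 0) (hg : g ≠ 0) (hh : h ≠ 0) :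
    tameSymbol f g h = leadHom K (leadHom (LaurentSeries K) (tameElem f g h)) := by
  rw [leadHom_apply (leadHom _ _), order_leadHom_tameElem hf hg hh, leadHom_apply,
    order_tameElem hf hg hh]
  rfl

end TameSymbolAux

/-- The higher tame symbol is antisymmetric in its first two arguments. -/
theorem tameSymbol_antisymm {K : Type*} [Field K]
    (f g h : LaurentSeries (LaurentSeries K)) (hf : f ≠ 0) (hg : g ≠ 0) (hh : h ≠ 0) :
    tameSymbol g f h = (tameSymbol f g h)⁻¹ := by
  rw [TameSymbolAux.tameSymbol_eq_lead hg hf hh, TameSymbolAux.tameSymbol_eq_lead hf hg hh,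
    TameSymbolAux.tameElem_swap, map_inv₀, map_inv₀]
end

section
/- Let K be a field and F := K((t₁))((t₂)). The higher tame symbol satisfies the Steinberg property: for every f ∈ F with f ≠ 0 and f ≠ 1, and every nonzero h ∈ F, T(f, 1 − f, h) = 1. -/
section OneVariable

variable {R : Type*}

/-- Leading terms of two Laurent series with sum `1`: either one of them has positive order and
the other is `1` plus terms of positive order, or both are units of order zero, or the leading
terms have negative order and cancel. -/
lemma LaurentSeries.order_cases_of_add_eq_one [Field R] {f g : LaurentSeries R}
    (hf : f ≠ 0) (hg : g ≠ 0) (h : f + g = 1) :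
    (0 < f.order ∧ g.order = 0 ∧ g.leadingCoeff = 1) ∨
    (0 < g.order ∧ f.order = 0 ∧ f.leadingCoeff = 1) ∨
    (f.order = 0 ∧ g.order = 0 ∧ f.leadingCoeff + g.leadingCoeff = 1) ∨
    (f.order < 0 ∧ g.order = f.order ∧ g.leadingCoeff = -f.leadingCoeff) := by
  have hc : ∀ n, f.coeff n + g.coeff n = (1 : LaurentSeries R).coeff n := fun n => by
    rw [← h, HahnSeries.coeff_add]
  have h1 : ∀ n : ℤ, n ≠ 0 → f.coeff n + g.coeff n = 0 := fun n hn => by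
    rw [hc, HahnSeries.coeff_one, if_neg hn]
  have h0 : f.coeff 0 + g.coeff 0 = 1 := by
    rw [hc, HahnSeries.coeff_one, if_pos rfl]
  have hf0 := HahnSeries.coeff_order_eq_zero.not.mpr hf
  have hg0 := HahnSeries.coeff_order_eq_zero.not.mpr hg
  have hfl : ∀ n, n < f.order → f.coeff n = 0 := fun n =>
    HahnSeries.coeff_eq_zero_of_lt_order
  have hgl : ∀ n, n < g.order → g.coeff n = 0 := fun n =>
    HahnSeries.coeff_eq_zero_of_lt_order
  simp only [HahnSeries.leadingCoeff_eq]
  -- distinct orders force the smaller one to be `0`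
  have key1 : f.order < g.order → f.order = 0 := fun hlt => by
    by_contra hn
    have := h1 _ hn
    rw [hgl _ hlt, add_zero] at this
    exact hf0 this
  have key2 : g.order < f.order → g.order = 0 := fun hlt => by
    by_contra hn
    have := h1 _ hn
    rw [hfl _ hlt, zero_add] at this
    exact hg0 this
  rcases lt_trichotomy f.order g.order with hlt | heq | hlt
  · have e := key1 hlt
    refine Or.inr (Or.inl ⟨e ▸ hlt, e, ?_⟩)
    rw [e] at hlt ⊢
    rwa [hgl _ hlt, add_zero] at h0
  · rcases lt_trichotomy f.order 0 with hn | hz | hp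
    · refine Or.inr (Or.inr (Or.inr ⟨hn, heq.symm, ?_⟩))
      rw [← heq]
      exact eq_neg_of_add_eq_zero_right (h1 _ hn.ne)
    · refine Or.inr (Or.inr (Or.inl ⟨hz, heq ▸ hz, ?_⟩))
      rw [← heq, hz, h0]
    · rw [hfl _ hp, hgl _ (heq ▸ hp), add_zero] at h0
      exact absurd h0 zero_ne_one
  · have e := key2 hlt
    refine Or.inl ⟨e ▸ hlt, e, ?_⟩
    rw [e] at hlt ⊢
    rwa [hfl _ hlt, zero_add] at h0

/-- A function additive on products of nonzero elements of a field is additive on integer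
powers. -/
lemma map_zpow_of_map_mul_eq_add {F : Type*} [Field F] (φ : F → ℤ)
    (hφ : ∀ x y, x ≠ 0 → y ≠ 0 → φ (x * y) = φ x + φ y) (x : F) (hx : x ≠ 0) (n : ℤ) :
    φ (x ^ n) = n * φ x := by
  have h1 : φ 1 = 0 := by
    have := hφ 1 1 one_ne_zero one_ne_zero
    rw [mul_one] at this
    lia
  induction n with
  | zero => simp [h1]
  | succ n ih => rw [zpow_add_one₀ hx, hφ _ _ (zpow_ne_zero _ hx) hx, ih]; ring
  | pred n ih =>
    have := hφ (x ^ (-(n : ℤ) - 1)) x (zpow_ne_zero _ hx) hx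
    rw [← zpow_add_one₀ hx, sub_add_cancel, ih] at this
    linear_combination -this

end OneVariable

section TwoVariables

variable {K : Type*} [Field K]

/-- The leading coefficient in `t₁` of the leading coefficient in `t₂`, as a multiplicative map
(with value `0` at `0`). -/
noncomputable def lc2 : LaurentSeries (LaurentSeries K) →*₀ K where
  toFun f := f.leadingCoeff.leadingCoeff
  map_zero' := by simp
  map_one' := by simp
  map_mul' f g := by simp only [HahnSeries.leadingCoeff_mul]

lemma lc2_apply (f : LaurentSeries (LaurentSeries K)) :
    lc2 f = f.leadingCoeff.leadingCoeff := rfl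

lemma v1_eq (f : LaurentSeries (LaurentSeries K)) : v1 f = f.leadingCoeff.order := by
  rw [v1, HahnSeries.leadingCoeff_eq]

lemma v2_mul_s12 (f g : LaurentSeries (LaurentSeries K)) (hf : f ≠ 0) (hg : g ≠ 0) :
    v2 (f * g) = v2 f + v2 g := HahnSeries.order_mul hf hg

lemma v1_mul_s12 (f g : LaurentSeries (LaurentSeries K)) (hf : f ≠ 0) (hg : g ≠ 0) :
    v1 (f * g) = v1 f + v1 g := by
  simp only [v1_eq, HahnSeries.leadingCoeff_mul]
  exact HahnSeries.order_mul (HahnSeries.leadingCoeff_ne_zero.mpr hf)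
    (HahnSeries.leadingCoeff_ne_zero.mpr hg)

lemma coeff_coeff_eq_lc2 {x : LaurentSeries (LaurentSeries K)} (h2 : v2 x = 0) (h1 : v1 x = 0) :
    (x.coeff 0).coeff 0 = lc2 x := by
  rw [lc2_apply, HahnSeries.leadingCoeff_eq (x := x.leadingCoeff), ← v1_eq, h1,
    HahnSeries.leadingCoeff_eq (x := x), ← v2, h2]

/-- The higher tame symbol depends only on `v2`, `v1` and `lc2` of its arguments. -/
lemma tameSymbol_eq_lc2 (f g h : LaurentSeries (LaurentSeries K))
    (hf : f ≠ 0) (hg : g ≠ 0) (hh : h ≠ 0) :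
    tameSymbol f g h =
      (-1) ^ (v2 f * v2 g * v1 h + v2 f * v2 h * v1 g + v2 g * v2 h * v1 f +
          v2 f * v1 g * v1 h + v2 g * v1 f * v1 h + v2 h * v1 f * v1 g) *
      lc2 f ^ (v2 g * v1 h - v2 h * v1 g) *
      lc2 g ^ (-(v2 f * v1 h - v2 h * v1 f)) *
      lc2 h ^ (v2 f * v1 g - v2 g * v1 f) := by
  have hn : (-1 : LaurentSeries (LaurentSeries K)) ≠ 0 := neg_ne_zero.mpr one_ne_zero
  -- an additive `φ` is computed on the product
  have key : ∀ φ : LaurentSeries (LaurentSeries K) → ℤ,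
      (∀ x y, x ≠ 0 → y ≠ 0 → φ (x * y) = φ x + φ y) → φ (-1) = 0 → ∀ a b c d : ℤ,
      φ ((-1) ^ a * f ^ b * g ^ c * h ^ d) = b * φ f + c * φ g + d * φ h := by
    intro φ hφ h1 a b c d
    have ha := zpow_ne_zero a hn
    have hb := zpow_ne_zero b hf
    have hc := zpow_ne_zero c hg
    have hd := zpow_ne_zero d hh
    rw [hφ _ _ (mul_ne_zero (mul_ne_zero ha hb) hc) hd, hφ _ _ (mul_ne_zero ha hb) hc,
      hφ _ _ ha hb]
    simp only [map_zpow_of_map_mul_eq_add φ hφ _ hn, map_zpow_of_map_mul_eq_add φ hφ _ hf,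
      map_zpow_of_map_mul_eq_add φ hφ _ hg, map_zpow_of_map_mul_eq_add φ hφ _ hh, h1]
    ring
  have hl : lc2 (-1 : LaurentSeries (LaurentSeries K)) = -1 := by
    simp [lc2_apply, HahnSeries.leadingCoeff_neg]
  rw [tameSymbol, coeff_coeff_eq_lc2]
  · simp only [map_mul, map_zpow₀, hl]
  · rw [key v2 v2_mul_s12 (by simp [v2, HahnSeries.order_neg])]
    ring
  · rw [key v1 v1_mul_s12 (by simp [v1_eq, HahnSeries.order_neg, HahnSeries.leadingCoeff_neg])]
    ring

/-- The possible leading terms of two series with sum `1`. -/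
lemma steinberg_cases {f g : LaurentSeries (LaurentSeries K)}
    (hf : f ≠ 0) (hg : g ≠ 0) (h : f + g = 1) :
    (v2 g = 0 ∧ v1 g = 0 ∧ lc2 g = 1) ∨ (v2 f = 0 ∧ v1 f = 0 ∧ lc2 f = 1) ∨
    (v2 f = 0 ∧ v1 f = 0 ∧ v2 g = 0 ∧ v1 g = 0) ∨
    (v2 g = v2 f ∧ v1 g = v1 f ∧ lc2 g = -lc2 f) := by
  simp only [v1_eq, lc2_apply, v2]
  rcases LaurentSeries.order_cases_of_add_eq_one hf hg h with
    ⟨-, h2, hl⟩ | ⟨-, h2, hl⟩ | ⟨h2f, h2g, hl⟩ | ⟨-, h2, hl⟩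
  · exact Or.inl ⟨h2, by simp [hl], by simp [hl]⟩
  · exact Or.inr (Or.inl ⟨h2, by simp [hl], by simp [hl]⟩)
  · -- both series have order zero in `t₂`, and their leading coefficients again have sum `1`
    rcases LaurentSeries.order_cases_of_add_eq_one (HahnSeries.leadingCoeff_ne_zero.mpr hf)
      (HahnSeries.leadingCoeff_ne_zero.mpr hg) hl with
      ⟨-, h1, hl⟩ | ⟨-, h1, hl⟩ | ⟨h1f, h1g, -⟩ | ⟨-, h1, hl⟩
    · exact Or.inl ⟨h2g, h1, hl⟩
    · exact Or.inr (Or.inl ⟨h2f, h1, hl⟩)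
    · exact Or.inr (Or.inr (Or.inl ⟨h2f, h1f, h2g, h1g⟩))
    · exact Or.inr (Or.inr (Or.inr ⟨h2g.trans h2f.symm, h1, hl⟩))
  · exact Or.inr (Or.inr (Or.inr
      ⟨h2, by rw [hl, HahnSeries.order_neg], by rw [hl, HahnSeries.leadingCoeff_neg]⟩))

end TwoVariables

/-- The Steinberg property of the higher tame symbol. -/
theorem tameSymbol_steinberg {K : Type*} [Field K]
    (f h : LaurentSeries (LaurentSeries K)) (hf : f ≠ 0) (hf1 : f ≠ 1) (hh : h ≠ 0) :
    tameSymbol f (1 - f) h = 1 := by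
  have hg : 1 - f ≠ 0 := sub_ne_zero.mpr hf1.symm
  rw [tameSymbol_eq_lc2 f (1 - f) h hf hg hh]
  rcases steinberg_cases hf hg (add_sub_cancel f 1) with
    ⟨h2, h1, hl⟩ | ⟨h2, h1, hl⟩ | ⟨h2f, h1f, h2g, h1g⟩ | ⟨h2, h1, hl⟩
  · simp [h2, h1, hl]
  · simp [h2, h1, hl]
  · simp [h2f, h1f, h2g, h1g]
  · have hlf : lc2 f ≠ 0 := (map_ne_zero (lc2 (K := K))).mpr hf
    rw [h2, h1, hl, mul_comm (v2 f) (v1 f), sub_self, zpow_zero, mul_one,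
      ← neg_one_mul (lc2 f), mul_zpow, mul_mul_mul_comm, mul_comm (v1 f) (v2 f)]
    generalize v2 f = a, v1 f = c, v2 h = p, v1 h = q
    have hn : (-1 : K) ≠ 0 := neg_ne_zero.mpr one_ne_zero
    rw [← zpow_add₀ hn, ← zpow_add₀ hlf, add_neg_cancel, zpow_zero, mul_one]
    -- the exponent is congruent modulo `2` to `a (a - 1) q + c (c + 1) p`
    refine Even.neg_one_zpow ?_
    have ha : Even (a * (a - 1)) := Int.even_mul_pred_self a
    have hc : Even (c * (c + 1)) := Int.even_mul_succ_self c
    obtain ⟨m, hm⟩ := ha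
    obtain ⟨n, hn'⟩ := hc
    exact ⟨m * q + n * p + a * p * c + a * c * q, by linear_combination q * hm + p * hn'⟩
end
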